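/- arXiv:2307.05005 — 3 statements merged into one kernel-verified Lean document; each statement's English description precedes it below -/
import Mathlib

section
/- Let L be a geometric lattice. Then the family I(L) of independent sets of L equals the family of independent sets of the matroid corresponding to L; concretely, a finite set A of atoms of L is NBB in (L,ω) for some linear order ω on the atoms of L if and only if |A| = rk(⋁A). -/
open Set

/-- `rk` is a rank function witnessing that a (bounded) lattice is graded:
it sends `⊥` to `0`, is strictly monotone, and increases by exactly one along covers. -/
def IsGradedRk {L : Type*} [CompleteLattice L] (rk : L → ℕ) : Prop :=
  rk ⊥ = 0 ∧ (∀ a b : L, a < b → rk a < rk b) ∧ (∀ a b : L, a ⋖ b → rk b = rk a + 1)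

/-- `D` is bounded below with respect to the order on atoms encoded by the labeling `ω`:
`D` is nonempty and some atom `a` is a strict `ω`-lower bound of every element of `D`
with `a ≤ ⋁ D`. -/
def IsBB {L : Type*} [CompleteLattice L] (ω : L → ℕ) (D : Set L) : Prop :=
  D.Nonempty ∧ ∃ a : L, IsAtom a ∧ (∀ d ∈ D, ω a < ω d) ∧ a ≤ sSup D

/-- `B` is a set of atoms containing no bounded-below subset. -/
def IsNBB {L : Type*} [CompleteLattice L] (ω : L → ℕ) (B : Set L) : Prop :=
  (∀ b ∈ B, IsAtom b) ∧ ∀ D ⊆ B, ¬ IsBB ω D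

/-- The family `I(L)` of independent sets of the lattice `L`: all sets of atoms that are
NBB with respect to some linear order on the atoms (a linear order on the atoms of the
finite lattice `L` being encoded as an `ℕ`-valued labeling injective on atoms). -/
def latIndep (L : Type*) [CompleteLattice L] : Set (Set L) :=
  { A | ∃ ω : L → ℕ, Set.InjOn ω {a : L | IsAtom a} ∧ IsNBB ω A }

/-!
In a set that is NBB for `ω`, adjoin the atoms from the `ω`-largest down: no new atom lies below
the join of those already present, so by semimodularity each step raises the rank by exactly one.
Conversely, if the rank of the join is the number of atoms, then no atom lies below the join of the
others, and any order that lists `A` before all other atoms makes `A` NBB, because an atom bounding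
a nonempty subset of `A` from below must then itself belong to `A`.
-/

theorem exists_injOn_forall_lt_of_finite_of_countable {α : Type*} {s t : Set α}
    (hs : s.Finite) (ht : t.Countable) :
    ∃ ω : α → ℕ, InjOn ω t ∧ ∀ a ∈ s, ∀ b ∉ s, ω a < ω b := by
  classical
  obtain ⟨e, he⟩ := countable_iff_exists_injOn.1 ht
  obtain ⟨N, hN⟩ := (hs.image e).bddAbove
  have e_le : ∀ a ∈ s, e a ≤ N := fun a ha ↦ hN (mem_image_of_mem e ha)
  refine ⟨fun x ↦ if x ∈ s then e x else N + 1 + e x, fun x hx y hy hxy ↦ he hx hy ?_, ?_⟩ <;>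
    grind

section

variable {L : Type*} [CompleteLattice L] {rk ω : L → ℕ} {a : L} {A B D : Set L}

theorem IsNBB.mono (hB : IsNBB ω B) (hAB : A ⊆ B) : IsNBB ω A :=
  ⟨fun a ha ↦ hB.1 a (hAB ha), fun D hD ↦ hB.2 D (hD.trans hAB)⟩

theorem IsNBB.not_le_sSup (hB : IsNBB ω B) (hDB : D ⊆ B) (ha : IsAtom a)
    (hlt : ∀ d ∈ D, ω a < ω d) : ¬ a ≤ sSup D := by
  intro hle
  rcases D.eq_empty_or_nonempty with rfl | hD
  · exact ha.1 (by simpa using hle)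
  · exact hB.2 D hDB ⟨hD, a, ha, hlt, hle⟩

theorem isNBB_of_sSupIndep (hA : ∀ a ∈ A, IsAtom a) (hind : sSupIndep A)
    (hω : ∀ a ∈ A, ∀ b ∉ A, ω a < ω b) : IsNBB ω A := by
  refine ⟨hA, ?_⟩
  rintro D hDA ⟨⟨d, hd⟩, a, ha, hlt, hle⟩
  have haA : a ∈ A := by
    by_contra haA
    exact (hlt d hd).asymm (hω d (hDA hd) a haA)
  have hD : D ⊆ A \ {a} := fun x hx ↦ ⟨hDA hx, fun hxa ↦ (hlt x hx).ne (hxa ▸ rfl)⟩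
  exact ha.1 ((hind haA).eq_bot_of_le (hle.trans (sSup_le_sSup hD)))

theorem mem_latIndep_of_sSupIndep (hatoms : {a : L | IsAtom a}.Countable) (hfin : A.Finite)
    (hA : ∀ a ∈ A, IsAtom a) (hind : sSupIndep A) : A ∈ latIndep L := by
  obtain ⟨ω, hinj, hω⟩ := exists_injOn_forall_lt_of_finite_of_countable hfin hatoms
  exact ⟨ω, hinj, isNBB_of_sSupIndep hA hind hω⟩

namespace IsGradedRk

theorem strictMono (hrk : IsGradedRk rk) : StrictMono rk := fun x y ↦ hrk.2.1 x y

theorem rk_eq_one_of_isAtom (hrk : IsGradedRk rk) (ha : IsAtom a) : rk a = 1 := by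
  rw [hrk.2.2 ⊥ a ha.bot_covBy, hrk.1]

theorem rk_sup_le_add_one_of_isAtom (hrk : IsGradedRk rk)
    (hsub : ∀ x y : L, rk (x ⊔ y) + rk (x ⊓ y) ≤ rk x + rk y) (ha : IsAtom a) (x : L) :
    rk (a ⊔ x) ≤ rk x + 1 := by
  have submodular := hsub a x
  have rk_atom := hrk.rk_eq_one_of_isAtom ha
  lia

theorem rk_sup_eq_add_one_of_not_le (hrk : IsGradedRk rk)
    (hsub : ∀ x y : L, rk (x ⊔ y) + rk (x ⊓ y) ≤ rk x + rk y) (ha : IsAtom a) {x : L}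
    (hax : ¬ a ≤ x) : rk (a ⊔ x) = rk x + 1 :=
  (hrk.rk_sup_le_add_one_of_isAtom hsub ha x).antisymm (hrk.strictMono (right_lt_sup.2 hax))

theorem rk_sSup_le_encard (hrk : IsGradedRk rk)
    (hsub : ∀ x y : L, rk (x ⊔ y) + rk (x ⊓ y) ≤ rk x + rk y) (hA : ∀ a ∈ A, IsAtom a) :
    (rk (sSup A) : ℕ∞) ≤ A.encard := by
  rcases A.finite_or_infinite with hfin | hinf
  · induction A, hfin using Set.Finite.induction_on with
    | empty => simp [hrk.1]
    | @insert a s has _ ih =>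
      rw [sSup_insert, encard_insert_of_notMem has]
      calc (rk (a ⊔ sSup s) : ℕ∞)
        _ ≤ rk (sSup s) + 1 := mod_cast
            hrk.rk_sup_le_add_one_of_isAtom hsub (hA a (mem_insert a s)) (sSup s)
        _ ≤ s.encard + 1 := by
            gcongr
            exact ih fun b hb ↦ hA b (mem_insert_of_mem a hb)
  · simp [hinf.encard_eq]

theorem sSupIndep_of_encard_eq_rk_sSup (hrk : IsGradedRk rk)
    (hsub : ∀ x y : L, rk (x ⊔ y) + rk (x ⊓ y) ≤ rk x + rk y) (hA : ∀ a ∈ A, IsAtom a)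
    (hcard : A.encard = rk (sSup A)) : sSupIndep A := by
  intro a ha
  rw [← (hA a ha).not_le_iff_disjoint]
  intro hle
  have sSup_eq : sSup A = sSup (A \ {a}) := by
    rw [← sup_eq_right.2 hle, ← sSup_insert, insert_sdiff_self_of_mem ha]
  have hlt : (A \ {a}).encard < A.encard :=
    (finite_of_encard_eq_coe hcard).sdiff.encard_lt_encard (sdiff_singleton_ssubset.2 ha)
  refine hlt.not_ge ?_
  rw [hcard, sSup_eq]
  exact hrk.rk_sSup_le_encard hsub fun b hb ↦ hA b hb.1

theorem rk_sSup_eq_card_of_isNBB (hrk : IsGradedRk rk)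
    (hsub : ∀ x y : L, rk (x ⊔ y) + rk (x ⊓ y) ≤ rk x + rk y) {S : Finset L}
    (hω : InjOn ω (S : Set L)) (hS : IsNBB ω (S : Set L)) : rk (sSup (S : Set L)) = S.card := by
  classical
  induction S using Finset.induction_on_min_value ω with
  | empty => simp [hrk.1]
  | insert a s has hmin ih =>
    rw [Finset.coe_insert] at hω hS ⊢
    have hss : (s : Set L) ⊆ insert a (s : Set L) := subset_insert a _
    have ha : IsAtom a := hS.1 a (mem_insert a _)
    have hlt : ∀ d ∈ (s : Set L), ω a < ω d := fun d hd ↦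
      (hmin d hd).lt_of_ne (hω.ne (mem_insert a _) (hss hd) (ne_of_mem_of_not_mem hd has).symm)
    rw [sSup_insert, hrk.rk_sup_eq_add_one_of_not_le hsub ha (hS.not_le_sSup hss ha hlt),
      ih (hω.mono hss) (hS.mono hss), Finset.card_insert_of_notMem has]

theorem finite_of_isNBB (hrk : IsGradedRk rk)
    (hsub : ∀ x y : L, rk (x ⊔ y) + rk (x ⊓ y) ≤ rk x + rk y) (hω : InjOn ω A)
    (hA : IsNBB ω A) : A.Finite := by
  by_contra hinf
  obtain ⟨S, hSA, hcard⟩ := Set.Infinite.exists_subset_card_eq hinf (rk (sSup A) + 1)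
  have rk_eq := hrk.rk_sSup_eq_card_of_isNBB hsub (hω.mono hSA) (hA.mono hSA)
  have rk_le := hrk.strictMono.monotone (sSup_le_sSup hSA)
  lia

theorem encard_eq_rk_sSup_of_isNBB (hrk : IsGradedRk rk)
    (hsub : ∀ x y : L, rk (x ⊔ y) + rk (x ⊓ y) ≤ rk x + rk y) (hω : InjOn ω A)
    (hA : IsNBB ω A) : A.encard = rk (sSup A) := by
  lift A to Finset L using hrk.finite_of_isNBB hsub hω hA
  rw [encard_coe_eq_coe_finsetCard, hrk.rk_sSup_eq_card_of_isNBB hsub hω hA]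

end IsGradedRk

end

theorem latIndep_iff_ncard_eq_rank_sSup_general
    {L : Type*} [CompleteLattice L] (hatoms : {a : L | IsAtom a}.Countable)
    (rk : L → ℕ) (hrk : IsGradedRk rk)
    (hsub : ∀ x y : L, rk (x ⊔ y) + rk (x ⊓ y) ≤ rk x + rk y)
    (A : Set L) (hA : ∀ a ∈ A, IsAtom a) :
    A ∈ latIndep L ↔ A.encard = rk (sSup A) := by
  constructor
  · rintro ⟨ω, hω, hnbb⟩
    exact hrk.encard_eq_rk_sSup_of_isNBB hsub (hω.mono hA) hnbb
  · intro hcard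
    exact mem_latIndep_of_sSupIndep hatoms (finite_of_encard_eq_coe hcard) hA
      (hrk.sSupIndep_of_encard_eq_rk_sSup hsub hA hcard)

/-- In a geometric lattice (finite, atomic, graded, with submodular rank),
a set `A` of atoms is independent (NBB for some linear order on the atoms) if and only if
`|A| = rk (⋁ A)`. -/
theorem latIndep_iff_ncard_eq_rank_sSup
    {L : Type*} [CompleteLattice L] [Fintype L] [IsAtomistic L]
    (rk : L → ℕ) (hrk : IsGradedRk rk)
    (hsub : ∀ x y : L, rk (x ⊔ y) + rk (x ⊓ y) ≤ rk x + rk y)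
    (A : Set L) (hA : ∀ a ∈ A, IsAtom a) :
    A ∈ latIndep L ↔ A.ncard = rk (sSup A) := by
  rw [latIndep_iff_ncard_eq_rank_sSup_general (to_countable _) rk hrk hsub A hA,
    ← A.toFinite.cast_ncard_eq, Nat.cast_inj]
end

section
/- Let L be a finite atomic graded lattice, P a geometric lattice, and f' : A(L) → A(P) a bijection between their sets of atoms. If f' can be extended to a map f : L → P that is an order embedding (X ≤ Y iff f(X) ≤ f(Y)) and rank-preserving (rk_P(f(X)) = rk_L(X) for all X ∈ L), then the image under f' of every set in I(L) belongs to I(P). -/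
open Set

/-!
An order embedding `f` satisfies `⋁ f(D) ≤ f(⋁ D)`, so `f(a) ≤ ⋁ f(D)` forces `a ≤ ⋁ D`. Hence,
when the atoms of `P` are the images of the atoms of `L`, a set `f(D)` of atoms that is bounded
below in `P` pulls back to a set `D` that is bounded below in `L` for the pulled back order, and an
order witnessing the independence of `A` may be transported along `f`.
-/

section

variable {L P : Type*} [CompleteLattice L] [CompleteLattice P]

theorem le_sSup_of_map_le_sSup_image (f : L ↪o P) {x : L} {s : Set L}
    (h : f x ≤ sSup (f '' s)) : x ≤ sSup s :=
  f.le_iff_le.mp <| h.trans <| sSup_image.trans_le f.monotone.le_map_sSup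

theorem IsBB.of_image {f : L ↪o P} (hf : SurjOn f {a | IsAtom a} {p | IsAtom p})
    {ω : P → ℕ} {D : Set L} (hD : IsBB ω (f '' D)) : IsBB (ω ∘ f) D := by
  obtain ⟨hne, p, hp, hlt, hle⟩ := hD
  obtain ⟨a, ha, rfl⟩ := hf hp
  exact ⟨hne.of_image, a, ha, fun d hd ↦ hlt (f d) (mem_image_of_mem f hd),
    le_sSup_of_map_le_sSup_image f hle⟩

theorem IsNBB.image {f : L ↪o P} (hf : f '' {a | IsAtom a} = {p | IsAtom p})
    {ω : P → ℕ} {A : Set L} (hA : IsNBB (ω ∘ f) A) : IsNBB ω (f '' A) := by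
  obtain ⟨hatoms, hnbb⟩ := hA
  refine ⟨(image_mono hatoms).trans hf.subset, fun D hD hBB ↦ ?_⟩
  obtain ⟨D, hDA, rfl⟩ := subset_image_iff.mp hD
  exact hnbb D hDA (hBB.of_image hf.superset)

theorem image_latIndep_of_extends_to_embedding_general (f' : L → P)
    (hf' : f' '' {a | IsAtom a} = {p | IsAtom p})
    (hext : ∃ f : L ↪o P, EqOn f f' {a | IsAtom a}) :
    ∀ A ∈ latIndep L, f' '' A ∈ latIndep P := by
  obtain ⟨f, hff'⟩ := hext
  rintro A ⟨ω, hω, hA⟩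
  have hf : f '' {a | IsAtom a} = {p | IsAtom p} := hff'.image_eq.trans hf'
  have hcomp : Function.extend f ω 0 ∘ f = ω := Function.extend_comp f.injective ω 0
  rw [← (hff'.mono hA.1).image_eq]
  refine ⟨Function.extend f ω 0, ?_, .image hf (hcomp.symm ▸ hA)⟩
  rw [← hf]
  exact InjOn.image_of_comp (hcomp.symm ▸ hω)

end

/-- Let `L` be a finite atomic graded lattice, `P` a geometric lattice and
`f'` a bijection between their sets of atoms. If `f'` extends to a rank-preserving order
embedding `f : L → P`, then the image under `f'` of every independent set of `L` is an
independent set of `P`. -/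
theorem image_latIndep_of_extends_to_embedding
    {L P : Type*} [CompleteLattice L] [Fintype L] [IsAtomistic L]
    [CompleteLattice P] [Fintype P] [IsAtomistic P]
    (rkL : L → ℕ) (hrkL : IsGradedRk rkL)
    (rkP : P → ℕ) (hrkP : IsGradedRk rkP)
    (hsubP : ∀ x y : P, rkP (x ⊔ y) + rkP (x ⊓ y) ≤ rkP x + rkP y)
    (f' : L → P) (hf' : Set.BijOn f' {a : L | IsAtom a} {a : P | IsAtom a})
    (hext : ∃ f : L → P, (∀ a : L, IsAtom a → f a = f' a) ∧
      (∀ X Y : L, X ≤ Y ↔ f X ≤ f Y) ∧ (∀ X : L, rkP (f X) = rkL X)) :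
    ∀ A ∈ latIndep L, f' '' A ∈ latIndep P := by
  obtain ⟨f, hff', hle, -⟩ := hext
  exact image_latIndep_of_extends_to_embedding_general f' hf'.image_eq
    ⟨.ofMapLEIff f fun X Y ↦ (hle X Y).symm, hff'⟩
end

section
/- Let L be a finite atomic graded lattice and B a basis of L. For every atom a ∉ B, the set B ∪ {a} contains a unique minimal dependent subset (a subset not belonging to I(L) all of whose proper subsets belong to I(L)), denoted C_{B,a}. -/
open Set

/-- A basis of a (finite atomic graded) lattice with rank function `rk`: a maximal
independent set every subset of which is geometric. -/
def IsLatBasis {L : Type*} [CompleteLattice L] (rk : L → ℕ) (B : Set L) : Prop :=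
  B ∈ latIndep L ∧ (∀ A ∈ latIndep L, B ⊆ A → A = B) ∧ ∀ S ⊆ B, S.ncard = rk (sSup S)

/-!
Joining a new least atom `s` to an independent set `A` keeps it independent unless `s ≤ ⋁ A`;
hence every atom of a circuit lies below the join of the others. Conversely, since all subsets of
a basis `B` are geometric, no atom of `B` lies below the join of others in `B`.

A circuit `C ⊆ B ∪ {a}` must contain `a`, and `C \ {a}` is contained in every `S ⊆ B` with
`a ≤ ⋁ S`: each `s ∈ C \ {a}` lies below the join of `C \ {s}`, in which `a` may be replaced by
`S`, so it lies below a join of elements of `B` and is one of them, necessarily in `S`. For a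
second circuit `C'` take `S = C' \ {a}`.
-/

section Labeling

variable {α : Type*} [DecidableEq α]

/-- The labeling that places `s` strictly below all other elements and otherwise orders them as
`ω` does. It turns an NBB labeling for `A` into one for `A ∪ {s}`. -/
def labelLeast (ω : α → ℕ) (s : α) : α → ℕ :=
  Function.update (fun x => ω x + 1) s 0

variable {ω : α → ℕ} {s : α} {A : Set α}

theorem labelLeast_self : labelLeast ω s s = 0 :=
  Function.update_self ..

theorem labelLeast_of_ne {x : α} (hx : x ≠ s) : labelLeast ω s x = ω x + 1 :=
  Function.update_of_ne hx ..

theorem injOn_labelLeast (hω : InjOn ω A) : InjOn (labelLeast ω s) A := by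
  intro x hx y hy hxy
  rcases eq_or_ne x s with hxs | hxs <;> rcases eq_or_ne y s with hys | hys
  · rw [hxs, hys]
  · simp [hxs, labelLeast_self, labelLeast_of_ne hys] at hxy
  · simp [hys, labelLeast_self, labelLeast_of_ne hxs] at hxy
  · rw [labelLeast_of_ne hxs, labelLeast_of_ne hys] at hxy
    exact hω hx hy (Nat.succ_injective hxy)

end Labeling

section Circuit

variable {L : Type*} [CompleteLattice L]

/-- A circuit of `I(L)`: a minimal dependent set, such as `C_{B,a}`. -/
def IsLatCircuit (C : Set L) : Prop :=
  C ∉ latIndep L ∧ ∀ D ⊂ C, D ∈ latIndep L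

/-- Geometric sets with respect to a rank function `rk`. As `ncard` is `0` on infinite sets, an
infinite set counts as geometric when its join has rank `0`. -/
def IsGeometric (rk : L → ℕ) (A : Set L) : Prop :=
  A.ncard = rk (sSup A)

variable {A B C S : Set L} {a s : L} {ω rk : L → ℕ}

theorem IsNBB.insert_labelLeast [DecidableEq L] (hA : IsNBB ω A) (hs : IsAtom s)
    (hsA : ¬ s ≤ sSup A) : IsNBB (labelLeast ω s) (insert s A) := by
  refine ⟨forall_mem_insert.2 ⟨hs, hA.1⟩, ?_⟩
  rintro D hD ⟨hne, c, hc, hlt, hle⟩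
  have hsD : s ∉ D := fun h => by simpa [labelLeast_self] using hlt s h
  have hDA : D ⊆ A := (subset_insert_iff_of_notMem hsD).1 hD
  have hcs : c ≠ s := by
    rintro rfl
    exact hsA (hle.trans (sSup_le_sSup hDA))
  refine hA.2 D hDA ⟨hne, c, hc, fun d hd => ?_, hle⟩
  have hds : d ≠ s := ne_of_mem_of_not_mem hd hsD
  simpa [labelLeast_of_ne hcs, labelLeast_of_ne hds] using hlt d hd

theorem isLowerSet_latIndep : IsLowerSet (latIndep L) := by
  rintro A D hDA ⟨ω, hω, hatoms, hnbb⟩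
  exact ⟨ω, hω, fun b hb => hatoms b (hDA hb), fun E hE => hnbb E (hE.trans hDA)⟩

theorem isAtom_of_mem_latIndep (hA : A ∈ latIndep L) (hs : s ∈ A) : IsAtom s := by
  obtain ⟨_, _, hatoms, _⟩ := hA
  exact hatoms s hs

theorem insert_mem_latIndep (hA : A ∈ latIndep L) (hs : IsAtom s) (hsA : ¬ s ≤ sSup A) :
    insert s A ∈ latIndep L := by
  classical
  obtain ⟨ω, hω, hnbb⟩ := hA
  exact ⟨labelLeast ω s, injOn_labelLeast hω, hnbb.insert_labelLeast hs hsA⟩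

theorem exists_isLatCircuit_subset (hfin : A.Finite) (hA : A ∉ latIndep L) :
    ∃ C ⊆ A, IsLatCircuit C := by
  have hdep_fin : {D | D ⊆ A ∧ D ∉ latIndep L}.Finite :=
    hfin.finite_subsets.subset fun _ hD => hD.1
  obtain ⟨C, -, hC⟩ := hdep_fin.exists_le_minimal ⟨Subset.rfl, hA⟩
  refine ⟨C, hC.prop.1, hC.prop.2, fun D hD => ?_⟩
  by_contra hDdep
  exact hC.not_ssubset ⟨hD.subset.trans hC.prop.1, hDdep⟩ hD

namespace IsLatCircuit

theorem le_sSup_sdiff_singleton (hC : IsLatCircuit C) (hsC : s ∈ C) (hs : IsAtom s) :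
    s ≤ sSup (C \ {s}) := by
  by_contra hle
  have hindep : C \ {s} ∈ latIndep L := hC.2 _ (sdiff_singleton_ssubset.2 hsC)
  have := insert_mem_latIndep hindep hs hle
  rw [insert_sdiff_singleton, insert_eq_of_mem hsC] at this
  exact hC.1 this

theorem mem_of_subset_insert (hC : IsLatCircuit C) (hB : B ∈ latIndep L) (hCB : C ⊆ insert a B) :
    a ∈ C := by
  by_contra haC
  exact hC.1 (isLowerSet_latIndep ((subset_insert_iff_of_notMem haC).1 hCB) hB)

theorem subset_insert_of_le_sSup (hC : IsLatCircuit C) (hB : sSupIndep B)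
    (hatoms : ∀ b ∈ B, IsAtom b) (hCB : C ⊆ insert a B) (hSB : S ⊆ B) (haS : a ≤ sSup S) :
    C ⊆ insert a S := by
  intro s hsC
  by_contra hs
  obtain ⟨hsa, hsS⟩ : s ≠ a ∧ s ∉ S := by simpa using hs
  have hsB : s ∈ B := (hCB hsC).resolve_left hsa
  have hsT : s ∉ S ∪ C \ {s, a} := by simp [hsS]
  have hTB : S ∪ C \ {s, a} ⊆ B :=
    union_subset hSB fun x hx => (hCB hx.1).resolve_left fun hxa => hx.2 (Or.inr hxa)
  have hle : s ≤ sSup (S ∪ C \ {s, a}) := calc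
    s ≤ sSup (C \ {s}) := hC.le_sSup_sdiff_singleton hsC (hatoms s hsB)
    _ ≤ sSup (insert a (C \ {s, a})) := sSup_le_sSup fun x hx => by
      rcases eq_or_ne x a with rfl | hxa
      · exact mem_insert ..
      · exact Or.inr ⟨hx.1, by simpa [hxa] using hx.2⟩
    _ = a ⊔ sSup (C \ {s, a}) := sSup_insert
    _ ≤ sSup S ⊔ sSup (C \ {s, a}) := sup_le_sup_right haS _
    _ = sSup (S ∪ C \ {s, a}) := sSup_union.symm
  exact (hatoms s hsB).not_le_iff_disjoint.2 (hB.disjoint_sSup hsB hTB hsT) hle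

theorem subset_of_subset_insert {C' : Set L} (hC : IsLatCircuit C) (hC' : IsLatCircuit C')
    (hB : B ∈ latIndep L) (hBind : sSupIndep B) (ha : IsAtom a) (hCB : C ⊆ insert a B)
    (hCB' : C' ⊆ insert a B) : C ⊆ C' := by
  have haC' : a ∈ C' := hC'.mem_of_subset_insert hB hCB'
  have haS : a ≤ sSup (C' \ {a}) := hC'.le_sSup_sdiff_singleton haC' ha
  have hSB : C' \ {a} ⊆ B := sdiff_singleton_subset_iff.2 hCB'
  have hatoms : ∀ b ∈ B, IsAtom b := fun _ => isAtom_of_mem_latIndep hB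
  simpa [insert_eq_of_mem haC'] using hC.subset_insert_of_le_sSup hBind hatoms hCB hSB haS

end IsLatCircuit

theorem finite_of_forall_subset_isGeometric (hrk : Monotone rk)
    (hB : ∀ S ⊆ B, IsGeometric rk S) : B.Finite := by
  by_contra hinf
  obtain ⟨b, hb⟩ := Set.Infinite.nonempty hinf
  have hrk_sSup : rk (sSup B) = 0 := (hB B Subset.rfl).symm.trans (Set.Infinite.ncard hinf)
  have hrk_b : 1 = rk b := by simpa [IsGeometric] using hB {b} (singleton_subset_iff.2 hb)
  have := hrk (le_sSup hb)
  omega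

theorem sSupIndep_of_forall_subset_isGeometric (hfin : B.Finite) (hatoms : ∀ b ∈ B, IsAtom b)
    (hB : ∀ S ⊆ B, IsGeometric rk S) : sSupIndep B := by
  intro b hb
  refine (hatoms b hb).not_le_iff_disjoint.1 fun hle => ?_
  have hsSup : sSup B = sSup (B \ {b}) := by
    rw [← sup_eq_right.2 hle, ← sSup_insert, insert_sdiff_singleton, insert_eq_of_mem hb]
  have hncard : B.ncard = (B \ {b}).ncard := calc
    B.ncard = rk (sSup B) := hB B Subset.rfl
    _ = rk (sSup (B \ {b})) := by rw [hsSup]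
    _ = (B \ {b}).ncard := (hB _ sdiff_subset).symm
  exact (ncard_sdiff_singleton_lt_of_mem hb hfin).ne' hncard

theorem IsGradedRk.monotone (hrk : IsGradedRk rk) : Monotone rk :=
  StrictMono.monotone fun _ _ => hrk.2.1 _ _

theorem IsLatBasis.insert_notMem_latIndep (hB : IsLatBasis rk B) (ha : a ∉ B) :
    insert a B ∉ latIndep L := fun h =>
  ha (insert_eq_self.1 (hB.2.1 _ h (subset_insert a B)))

theorem fundamental_circuit_unique_general (hrk : IsGradedRk rk) (hB : IsLatBasis rk B)
    (haAtom : IsAtom a) (ha : a ∉ B) :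
    ∃! C : Set L, C ⊆ insert a B ∧ IsLatCircuit C := by
  have hatoms : ∀ b ∈ B, IsAtom b := fun _ => isAtom_of_mem_latIndep hB.1
  have hfin : B.Finite := finite_of_forall_subset_isGeometric hrk.monotone hB.2.2
  have hind : sSupIndep B := sSupIndep_of_forall_subset_isGeometric hfin hatoms hB.2.2
  obtain ⟨C, hCB, hC⟩ :=
    exists_isLatCircuit_subset (hfin.insert a) (hB.insert_notMem_latIndep ha)
  refine ⟨C, ⟨hCB, hC⟩, fun C' ⟨hCB', hC'⟩ => Subset.antisymm ?_ ?_⟩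
  · exact hC'.subset_of_subset_insert hC hB.1 hind haAtom hCB' hCB
  · exact hC.subset_of_subset_insert hC' hB.1 hind haAtom hCB hCB'

end Circuit

/-- Let `L` be a finite atomic graded lattice and `B` a basis of `L`. For
every atom `a ∉ B`, the set `B ∪ {a}` contains a unique minimal dependent subset (a set not
in `I(L)` all of whose proper subsets are in `I(L)`). -/
theorem fundamental_circuit_unique
    {L : Type*} [CompleteLattice L] [Fintype L] [IsAtomistic L]
    (rk : L → ℕ) (hrk : IsGradedRk rk)
    (B : Set L) (hB : IsLatBasis rk B)
    (a : L) (haAtom : IsAtom a) (ha : a ∉ B) :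
    ∃! C : Set L, C ⊆ insert a B ∧ C ∉ latIndep L ∧ ∀ D ⊂ C, D ∈ latIndep L :=
  fundamental_circuit_unique_general hrk hB haAtom ha
end
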